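/- arXiv:1203.4863 — 2 statements merged into one kernel-verified Lean document; each statement's English description precedes it below -/
import Mathlib

section
/- Let G be a connected simple graph on a finite vertex set with maximum degree at most Δ (Δ ≥ 2) and diameter D ≥ 2. For a vertex v, let T(v) be the number of ordered pairs (x,z) of vertices with x ≠ v, z ≠ v and d(x,v) + d(v,z) = d(x,z) (i.e., v lies on some shortest path from x to z). Then for every vertex v, T(v) ≤ Δ²·(Δ−1)^(D−2)·D². -/
/-!
A vertex at distance `k + 1 ≥ 1` from `v` has a neighbour at distance `k`, so at most `Δ - 1` of its
neighbours are at distance `k + 2`; hence at most `Δ * (Δ - 1) ^ k` vertices are at distance `k + 1`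
from `v`. If `v` lies on a geodesic from `x` to `z`, at distances `i + 1` and `j + 1` from its ends,
then `i + j ≤ D - 2`. For each of the at most `D ^ 2` such `(i, j)`, the number of pairs `(x, z)` is
at most `Δ (Δ - 1) ^ i * Δ (Δ - 1) ^ j ≤ Δ ^ 2 * (Δ - 1) ^ (D - 2)`.
-/

lemma encard_biUnion_le_mul {ι α : Type*} {s : Set ι} {t : ι → Set α} {n : ℕ∞}
    (ht : ∀ i ∈ s, (t i).encard ≤ n) : (⋃ i ∈ s, t i).encard ≤ s.encard * n := by
  obtain rfl | hn := eq_or_ne n 0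
  · simpa using ht
  obtain hs | hs := s.finite_or_infinite
  · lift s to Finset ι using hs
    calc (⋃ i ∈ s, t i).encard
      _ ≤ ∑ i ∈ s, (t i).encard := s.set_encard_biUnion_le t
      _ ≤ ∑ _i ∈ s, n := Finset.sum_le_sum ht
      _ = (s : Set ι).encard * n := by simp
  · simp [hs.encard_eq, ENat.top_mul hn]

section

variable {V : Type*} {G : SimpleGraph V}

lemma encard_neighborSet_eq_degree (v : V) [Fintype (G.neighborSet v)] :
    (G.neighborSet v).encard = G.degree v := by
  rw [← G.coe_neighborFinset, Set.encard_coe_eq_coe_finsetCard, G.card_neighborFinset_eq_degree]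

lemma exists_adj_edist_eq_of_edist_eq_add_one {u v : V} {k : ℕ} (h : G.edist v u = k + 1) :
    ∃ w, G.Adj u w ∧ G.edist v w = k := by
  obtain ⟨p, hp⟩ := SimpleGraph.exists_walk_of_edist_eq_coe (k := k + 1) (by
    rw [SimpleGraph.edist_comm, h, Nat.cast_add_one])
  cases p with
  | nil => simp at hp
  | @cons _ w _ hadj q =>
    refine ⟨w, hadj, le_antisymm ?_ ?_⟩
    · have hq : q.length = k := by simpa using hp
      simpa [hq, SimpleGraph.edist_comm] using SimpleGraph.edist_le q
    · have htri : G.edist v u ≤ G.edist v w + G.edist w u := SimpleGraph.edist_triangle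
      rw [h, SimpleGraph.edist_eq_one_iff_adj.2 hadj.symm] at htri
      exact (ENat.add_le_add_iff_right ENat.one_ne_top).1 htri

lemma encard_setOf_adj_and_edist_eq_add_two_le {u v : V} {k : ℕ} (h : G.edist v u = k + 1) :
    {x | G.Adj u x ∧ G.edist v x = k + 2}.encard ≤ (G.neighborSet u).encard - 1 := by
  obtain ⟨w, hw, hvw⟩ := exists_adj_edist_eq_of_edist_eq_add_one h
  have hsub : {x | G.Adj u x ∧ G.edist v x = k + 2} ⊆ G.neighborSet u \ {w} := by
    rintro x ⟨hx, hvx⟩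
    refine ⟨hx, ?_⟩
    rintro rfl
    rw [hvw] at hvx
    norm_cast at hvx
    omega
  calc {x | G.Adj u x ∧ G.edist v x = k + 2}.encard
    _ ≤ (G.neighborSet u \ {w}).encard := Set.encard_le_encard hsub
    _ = (G.neighborSet u).encard - 1 := Set.encard_sdiff_singleton_of_mem hw

lemma encard_setOf_edist_eq_add_one_le {Δ : ℕ∞} (hdeg : ∀ u, (G.neighborSet u).encard ≤ Δ)
    (v : V) (k : ℕ) :
    {x | G.edist v x = k + 1}.encard ≤ Δ * (Δ - 1) ^ k := by
  induction k with
  | zero => simpa [SimpleGraph.neighborSet] using hdeg v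
  | succ k ih =>
    have hsub : {x | G.edist v x = (k + 1 : ℕ) + 1} ⊆
        ⋃ u ∈ {u | G.edist v u = k + 1}, {x | G.Adj u x ∧ G.edist v x = k + 2} := by
      intro x hx
      obtain ⟨u, hxu, hu⟩ := exists_adj_edist_eq_of_edist_eq_add_one hx
      exact Set.mem_biUnion (by simpa using hu) ⟨hxu.symm, by rw [hx]; norm_cast⟩
    calc {x | G.edist v x = (k + 1 : ℕ) + 1}.encard
      _ ≤ _ := Set.encard_le_encard hsub
      _ ≤ {u | G.edist v u = k + 1}.encard * (Δ - 1) :=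
        encard_biUnion_le_mul fun u hu ↦
          (encard_setOf_adj_and_edist_eq_add_two_le hu).trans (tsub_le_tsub_right (hdeg u) 1)
      _ ≤ Δ * (Δ - 1) ^ k * (Δ - 1) := by gcongr
      _ = Δ * (Δ - 1) ^ (k + 1) := by rw [pow_succ, mul_assoc]

lemma encard_setOf_edist_eq_add_one_prod_le {Δ : ℕ∞}
    (hdeg : ∀ u, (G.neighborSet u).encard ≤ Δ) (v : V) (i j : ℕ) :
    ({x | G.edist v x = i + 1} ×ˢ {z | G.edist v z = j + 1}).encard ≤
      Δ ^ 2 * (Δ - 1) ^ (i + j) :=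
  calc ({x | G.edist v x = i + 1} ×ˢ {z | G.edist v z = j + 1}).encard
    _ = {x | G.edist v x = i + 1}.encard * {z | G.edist v z = j + 1}.encard := Set.encard_prod
    _ ≤ (Δ * (Δ - 1) ^ i) * (Δ * (Δ - 1) ^ j) :=
      mul_le_mul' (encard_setOf_edist_eq_add_one_le hdeg v i)
        (encard_setOf_edist_eq_add_one_le hdeg v j)
    _ = Δ ^ 2 * (Δ - 1) ^ (i + j) := by ring

lemma exists_edist_eq_add_one_of_ne {v x : V} (hne : v ≠ x) (hfin : G.edist v x ≠ ⊤) :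
    ∃ k : ℕ, G.edist v x = k + 1 := by
  obtain ⟨n, hn⟩ := ENat.ne_top_iff_exists.1 hfin
  have hpos : 0 < G.edist v x := SimpleGraph.edist_pos_of_ne hne
  rw [← hn] at hpos ⊢
  norm_cast at hpos ⊢
  exact ⟨n - 1, by omega⟩

/-- If `v` lies on a geodesic from `x` to `z`, the sum is the distance from `x` to `z`, hence at
most the diameter. As `edist` is `⊤` between components, both ends are in the component of `v`. -/
theorem flow_le_of_maxDegree_diam_general {Δ : ℕ∞} (hΔ : 2 ≤ Δ)
    (hdeg : ∀ u, (G.neighborSet u).encard ≤ Δ) (D : ℕ) (v : V) :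
    {p : V × V | p.1 ≠ v ∧ p.2 ≠ v ∧ G.edist p.1 v + G.edist v p.2 ≤ D}.encard ≤
      Δ ^ 2 * (Δ - 1) ^ (D - 2) * D ^ 2 := by
  let I : Finset (ℕ × ℕ) := {q ∈ Finset.range D ×ˢ Finset.range D | q.1 + q.2 ≤ D - 2}
  have hcover : {p : V × V | p.1 ≠ v ∧ p.2 ≠ v ∧ G.edist p.1 v + G.edist v p.2 ≤ D} ⊆
      ⋃ q ∈ (I : Set (ℕ × ℕ)), {x | G.edist v x = q.1 + 1} ×ˢ {z | G.edist v z = q.2 + 1} := by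
    rintro ⟨x, z⟩ ⟨hx, hz, hxz⟩
    rw [SimpleGraph.edist_comm] at hxz
    have hfin := WithTop.add_ne_top.1 (ne_top_of_le_ne_top (ENat.natCast_ne_top D) hxz)
    obtain ⟨i, hi⟩ := exists_edist_eq_add_one_of_ne hx.symm hfin.1
    obtain ⟨j, hj⟩ := exists_edist_eq_add_one_of_ne hz.symm hfin.2
    have hij : (i + 1) + (j + 1) ≤ D := by
      rw [hi, hj] at hxz
      exact_mod_cast hxz
    have hI : (i, j) ∈ I := by
      simp only [I, Finset.mem_filter, Finset.mem_product, Finset.mem_range]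
      omega
    exact Set.mem_biUnion hI ⟨hi, hj⟩
  have hI : (I : Set (ℕ × ℕ)).encard ≤ D ^ 2 := by
    have hcard : I.card ≤ D ^ 2 := (Finset.card_filter_le _ _).trans_eq (by simp [sq])
    rw [Set.encard_coe_eq_coe_finsetCard]
    exact_mod_cast hcard
  have hΔ' : 1 ≤ Δ - 1 := ENat.le_sub_of_add_le_right ENat.one_ne_top (by rwa [one_add_one_eq_two])
  calc {p : V × V | p.1 ≠ v ∧ p.2 ≠ v ∧ G.edist p.1 v + G.edist v p.2 ≤ D}.encard
    _ ≤ _ := Set.encard_le_encard hcover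
    _ ≤ (I : Set (ℕ × ℕ)).encard * (Δ ^ 2 * (Δ - 1) ^ (D - 2)) :=
      encard_biUnion_le_mul fun q hq ↦
        (encard_setOf_edist_eq_add_one_prod_le hdeg v q.1 q.2).trans <| by
          gcongr
          exact (Finset.mem_filter.1 hq).2
    _ ≤ D ^ 2 * (Δ ^ 2 * (Δ - 1) ^ (D - 2)) := by gcongr
    _ = Δ ^ 2 * (Δ - 1) ^ (D - 2) * D ^ 2 := mul_comm _ _

end

/-- **Vertex-flow bound for bounded-degree graphs (the paper's Lemma).** Let `G` be a finite
connected simple graph with maximum degree at most `Δ` (`Δ ≥ 2`) and diameter `D ≥ 2`.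
For every vertex `v`, the number `T(v)` of ordered pairs `(x, z)` with `x ≠ v`, `z ≠ v` and
`d(x,v) + d(v,z) = d(x,z)` (i.e. `v` lies on some shortest path from `x` to `z`) satisfies
`T(v) ≤ Δ² * (Δ - 1)^(D - 2) * D²`. -/
theorem flow_le_of_maxDegree_diam {V : Type*} [Fintype V] [DecidableEq V]
    (G : SimpleGraph V) [DecidableRel G.Adj] (hG : G.Connected)
    (Δ : ℕ) (hΔ : 2 ≤ Δ) (hdeg : G.maxDegree ≤ Δ)
    (D : ℕ) (hD2 : 2 ≤ D)
    (hD_le : ∀ x y : V, G.dist x y ≤ D) (hD_max : ∃ x y : V, G.dist x y = D) (v : V) :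
    (Finset.univ.filter fun p : V × V =>
        p.1 ≠ v ∧ p.2 ≠ v ∧ G.dist p.1 v + G.dist v p.2 = G.dist p.1 p.2).card ≤
      Δ ^ 2 * (Δ - 1) ^ (D - 2) * D ^ 2 := by
  have hdeg' (u : V) : (G.neighborSet u).encard ≤ Δ := by
    rw [encard_neighborSet_eq_degree]
    exact_mod_cast (G.degree_le_maxDegree u).trans hdeg
  have hflow := flow_le_of_maxDegree_diam_general (Δ := Δ) (by exact_mod_cast hΔ) hdeg' D v
  rw [← Nat.cast_le (α := ℕ∞), ← Set.encard_coe_eq_coe_finsetCard]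
  push_cast
  refine le_trans (Set.encard_le_encard fun p hp ↦ ?_) hflow
  obtain ⟨hx, hz, hxz⟩ := hp.2
  refine ⟨hx, hz, ?_⟩
  rw [← (hG p.1 v).coe_dist_eq_edist, ← (hG v p.2).coe_dist_eq_edist]
  exact_mod_cast hxz.trans_le (hD_le p.1 p.2)
end

section
/- Let k ≥ 2 and C > 0 be real numbers and let G be a connected simple graph on N ≥ 3 vertices with maximum degree at most k and diameter D satisfying 2 ≤ D ≤ (log N)/(log k) + (log log N)/(log k) + C (natural logarithms). For a vertex v, let T(v) be the number of ordered pairs (x,z) of vertices with x ≠ v, z ≠ v and d(x,v) + d(v,z) = d(x,z). Then for every vertex v, T(v) ≤ k^C · N · (log N) · D². -/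
open Real

/-!
A pair `(x, z)` counted at `v` with `d(x, z) = s` and `d(v, x) = i` has `0 < i < s ≤ D` and
`d(v, z) = s - i`. Spheres of radius `r` have at most `k ^ r` vertices, so each of the `D.choose 2`
choices of `(s, i)` accounts for at most `k ^ i * k ^ (s - i) = k ^ s ≤ k ^ D` pairs, and the
hypothesis on the diameter says precisely that `k ^ D ≤ k ^ C * N * log N`.
-/

theorem encard_biUnion_le_encard_mul {ι α : Type*} {s : Set ι} {f : ι → Set α} {n : ℕ∞}
    (h : ∀ i ∈ s, (f i).encard ≤ n) : (⋃ i ∈ s, f i).encard ≤ s.encard * n := by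
  rcases s.finite_or_infinite with hs | hs
  · lift s to Finset ι using hs
    calc (⋃ i ∈ (s : Set ι), f i).encard ≤ ∑ i ∈ s, (f i).encard := s.set_encard_biUnion_le f
      _ ≤ s.card • n := s.sum_le_card_nsmul _ _ h
      _ = (s : Set ι).encard * n := by rw [Set.encard_coe_eq_coe_finsetCard, nsmul_eq_mul]
  · rcases eq_or_ne n 0 with rfl | hn
    · have hempty : ∀ i ∈ s, f i = ∅ := by simpa using h
      simp [Set.iUnion₂_congr hempty]
    · simp [hs.encard_eq, ENat.top_mul hn]

theorem rpow_le_rpow_mul_mul_of_le_log_div {k x y C d : ℝ} (hk : 1 < k) (hx : 0 < x) (hy : 0 < y)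
    (hd : d ≤ log x / log k + log y / log k + C) : k ^ d ≤ k ^ C * x * y := by
  have hk0 : 0 < k := zero_lt_one.trans hk
  calc k ^ d ≤ k ^ (logb k x + logb k y + C) := rpow_le_rpow_of_exponent_le hk.le hd
    _ = x * y * k ^ C := by
      rw [rpow_add hk0, rpow_add hk0, rpow_logb hk0 hk.ne' hx, rpow_logb hk0 hk.ne' hy]
    _ = k ^ C * x * y := by ring

/-- The possible positions of an interior vertex on a path of length at most `D`, encoded as pairs
`⟨s, i⟩` with `s` the length of the path and `i` the distance from its starting point. -/
def interiorPositions (D : ℕ) : Finset (Σ _ : ℕ, ℕ) :=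
  (Finset.range (D + 1)).sigma fun s => Finset.Ioo 0 s

theorem mem_interiorPositions {D s i : ℕ} :
    ⟨s, i⟩ ∈ interiorPositions D ↔ s ≤ D ∧ 0 < i ∧ i < s := by
  simp [interiorPositions]

theorem card_interiorPositions (D : ℕ) : (interiorPositions D).card = D.choose 2 := by
  simp [interiorPositions, Finset.sum_range_succ', Finset.sum_range_id, Nat.choose_two_right]

section Graph

variable {V : Type*}

/-- The sphere of radius `r` around `v` in the graph distance. As `G.dist` is `0` between different
components, the sphere of radius `0` is `{v}` only when `G` is connected. -/
def distSphere (G : SimpleGraph V) (v : V) (r : ℕ) : Set V := {x | G.dist v x = r}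

/-- The ordered pairs of vertices other than `v` that are joined by a geodesic through `v`; their
number bounds the flow through `v` under geodesic routing. -/
def transitPairs (G : SimpleGraph V) (v : V) : Set (V × V) :=
  {p | p.1 ≠ v ∧ p.2 ≠ v ∧ G.dist p.1 v + G.dist v p.2 = G.dist p.1 p.2}

variable {G : SimpleGraph V}

theorem exists_adj_dist_eq_of_dist_eq_succ {v x : V} {n : ℕ} (h : G.dist v x = n + 1) :
    ∃ w, G.dist v w = n ∧ G.Adj w x := by
  obtain ⟨p, hp⟩ := G.exists_walk_of_dist_ne_zero (h.trans_ne n.succ_ne_zero)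
  have hadj : G.Adj p.penultimate x := p.adj_penultimate (by
    rw [← SimpleGraph.Walk.length_eq_zero_iff]
    omega)
  have hle : G.dist v p.penultimate ≤ n := by
    have := G.dist_le p.dropLast
    rw [p.length_dropLast] at this
    omega
  have := hadj.diff_dist_adj (u := v)
  exact ⟨p.penultimate, by omega, hadj⟩

theorem distSphere_zero (hG : G.Connected) (v : V) : distSphere G v 0 = {v} := by
  ext x
  simp [distSphere, hG.dist_eq_zero_iff, eq_comm]

theorem distSphere_succ_subset (v : V) (r : ℕ) :
    distSphere G v (r + 1) ⊆ ⋃ w ∈ distSphere G v r, G.neighborSet w := fun _ hx =>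
  let ⟨_, hw, hadj⟩ := exists_adj_dist_eq_of_dist_eq_succ hx
  Set.mem_biUnion hw hadj

theorem encard_distSphere_le_pow [G.LocallyFinite] (hG : G.Connected) {Δ : ℕ}
    (hΔ : ∀ x, G.degree x ≤ Δ) (v : V) (r : ℕ) : (distSphere G v r).encard ≤ (Δ : ℕ∞) ^ r := by
  induction r with
  | zero => simp [distSphere_zero hG]
  | succ r ih =>
    have hnbr (w : V) : (G.neighborSet w).encard ≤ Δ := by
      rw [Set.encard_eq_coe_toFinset_card, Set.toFinset_card, G.card_neighborSet_eq_degree]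
      exact_mod_cast hΔ w
    calc (distSphere G v (r + 1)).encard
        ≤ (⋃ w ∈ distSphere G v r, G.neighborSet w).encard :=
          Set.encard_le_encard (distSphere_succ_subset v r)
      _ ≤ (distSphere G v r).encard * Δ := encard_biUnion_le_encard_mul fun w _ => hnbr w
      _ ≤ (Δ : ℕ∞) ^ r * Δ := by gcongr
      _ = (Δ : ℕ∞) ^ (r + 1) := (pow_succ _ _).symm

theorem transitPairs_subset_biUnion_distSphere (hG : G.Connected) {D : ℕ}
    (hD : ∀ x y, G.dist x y ≤ D) (v : V) :
    transitPairs G v ⊆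
      ⋃ q ∈ interiorPositions D, distSphere G v q.2 ×ˢ distSphere G v (q.1 - q.2) := by
  rintro ⟨x, z⟩ ⟨hx, hz, hxz⟩
  dsimp only at hx hz hxz
  have hvx : 0 < G.dist v x := hG.pos_dist_of_ne hx.symm
  have hvz : 0 < G.dist v z := hG.pos_dist_of_ne hz.symm
  rw [G.dist_comm (u := x) (v := v)] at hxz
  simp only [Set.mem_iUnion]
  exact ⟨⟨G.dist x z, G.dist v x⟩, mem_interiorPositions.2 ⟨hD x z, hvx, by omega⟩, rfl,
    Nat.eq_sub_of_add_eq' hxz⟩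

theorem encard_transitPairs_le [G.LocallyFinite] (hG : G.Connected) {Δ D : ℕ} (hΔ₁ : 1 ≤ Δ)
    (hΔ : ∀ x, G.degree x ≤ Δ) (hD : ∀ x y, G.dist x y ≤ D) (v : V) :
    (transitPairs G v).encard ≤ ((D.choose 2 * Δ ^ D : ℕ) : ℕ∞) := by
  have hfibre : ∀ q ∈ interiorPositions D,
      (distSphere G v q.2 ×ˢ distSphere G v (q.1 - q.2)).encard ≤ (Δ : ℕ∞) ^ D := by
    rintro ⟨s, i⟩ hq
    obtain ⟨hs, -, hi⟩ := mem_interiorPositions.1 hq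
    calc (distSphere G v i ×ˢ distSphere G v (s - i)).encard
        = (distSphere G v i).encard * (distSphere G v (s - i)).encard := Set.encard_prod
      _ ≤ (Δ : ℕ∞) ^ i * (Δ : ℕ∞) ^ (s - i) := by
        gcongr <;> exact encard_distSphere_le_pow hG hΔ v _
      _ = (Δ : ℕ∞) ^ s := by rw [← pow_add, Nat.add_sub_cancel' hi.le]
      _ ≤ (Δ : ℕ∞) ^ D := pow_le_pow_right₀ (by exact_mod_cast hΔ₁) hs
  have hcount := (Set.encard_le_encard (transitPairs_subset_biUnion_distSphere hG hD v)).trans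
    (encard_biUnion_le_encard_mul hfibre)
  rw [Set.encard_coe_eq_coe_finsetCard, card_interiorPositions] at hcount
  exact_mod_cast hcount

end Graph

theorem flow_le_of_small_diam_general {V : Type*} [Fintype V] [Nontrivial V] [DecidableEq V]
    (G : SimpleGraph V) [DecidableRel G.Adj] (hG : G.Connected) {k C : ℝ} (hk : 1 < k)
    (hdeg : (G.maxDegree : ℝ) ≤ k) {D : ℕ} (hD_le : ∀ x y, G.dist x y ≤ D)
    (hD : (D : ℝ) ≤ log (Fintype.card V) / log k + log (log (Fintype.card V)) / log k + C)
    (v : V) :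
    ((Finset.univ.filter fun p : V × V =>
        p.1 ≠ v ∧ p.2 ≠ v ∧ G.dist p.1 v + G.dist v p.2 = G.dist p.1 p.2).card : ℝ) ≤
      k ^ C * Fintype.card V * log (Fintype.card V) * D.choose 2 := by
  have hcard : (1 : ℝ) < Fintype.card V := by exact_mod_cast Fintype.one_lt_card
  have hkD : k ^ D ≤ k ^ C * Fintype.card V * log (Fintype.card V) := by
    rw [← rpow_natCast]
    exact rpow_le_rpow_mul_mul_of_le_log_div hk (by positivity) (log_pos hcard) hD
  have hcount := encard_transitPairs_le hG (Δ := ⌊k⌋₊) (Nat.one_le_floor_iff k |>.2 hk.le)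
    (fun x => (G.degree_le_maxDegree x).trans (Nat.le_floor hdeg)) hD_le v
  have htransit : transitPairs G v = (Finset.univ.filter fun p : V × V =>
      p.1 ≠ v ∧ p.2 ≠ v ∧ G.dist p.1 v + G.dist v p.2 = G.dist p.1 p.2 : Finset (V × V)) := by
    simp [transitPairs]
  rw [htransit, Set.encard_coe_eq_coe_finsetCard, Nat.cast_le] at hcount
  calc _ ≤ ((D.choose 2 * ⌊k⌋₊ ^ D : ℕ) : ℝ) := Nat.cast_le.2 hcount
    _ ≤ D.choose 2 * k ^ D := by
      push_cast
      gcongr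
      exact Nat.floor_le (by positivity)
    _ ≤ D.choose 2 * (k ^ C * Fintype.card V * log (Fintype.card V)) := by gcongr
    _ = _ := mul_comm _ _

/-- **Deterministic core of the random-matching congestion theorem.** Let `k ≥ 2` and `C > 0`
be reals and `G` a finite connected simple graph on `N ≥ 3` vertices with maximum degree at
most `k` and diameter `D` with `2 ≤ D ≤ log N / log k + log (log N) / log k + C` (natural
logarithms).  Then for every vertex `v`, the number `T(v)` of ordered pairs `(x, z)` with
`x ≠ v`, `z ≠ v` and `d(x,v) + d(v,z) = d(x,z)` satisfies
`T(v) ≤ k ^ C * N * log N * D ^ 2`. -/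
theorem flow_le_of_small_diam {V : Type*} [Fintype V] [DecidableEq V]
    (G : SimpleGraph V) [DecidableRel G.Adj] (hG : G.Connected)
    (k C : ℝ) (hk : 2 ≤ k) (hC : 0 < C)
    (N : ℕ) (hN : N = Fintype.card V) (hN3 : 3 ≤ N)
    (hdeg : (G.maxDegree : ℝ) ≤ k)
    (D : ℕ) (hD2 : 2 ≤ D)
    (hD_le : ∀ x y : V, G.dist x y ≤ D) (hD_max : ∃ x y : V, G.dist x y = D)
    (hD : (D : ℝ) ≤ Real.log N / Real.log k + Real.log (Real.log N) / Real.log k + C)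
    (v : V) :
    ((Finset.univ.filter fun p : V × V =>
        p.1 ≠ v ∧ p.2 ≠ v ∧ G.dist p.1 v + G.dist v p.2 = G.dist p.1 p.2).card : ℝ) ≤
      k ^ C * N * Real.log N * (D : ℝ) ^ 2 := by
  subst hN
  have : Nontrivial V := Fintype.one_lt_card_iff_nontrivial.1 (by omega)
  refine (flow_le_of_small_diam_general G hG (by linarith) hdeg hD_le hD v).trans ?_
  gcongr
  exact_mod_cast D.choose_le_pow 2
end
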